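/- Let K ≥ 1, let w₁, …, w_K be strictly positive reals with w₁ + ⋯ + w_K = 1, let μ₁, …, μ_K ∈ ℝ, and let σ₀ > 0 and t > 0. With p₀, p_t, w̃_i, and f_t defined as follows: p₀(x) = Σ_{i=1}^K w_i · N(x | μ_i, σ₀²), p_t(x) = Σ_{i=1}^K w_i · N(x | μ_i, σ₀² + t²), w̃_i(x) = w_i · N(x | μ_i, σ₀²) / Σ_{j=1}^K w_j · N(x | μ_j, σ₀²), and f_t(x) = −log p₀(x) − log( Σ_{i=1}^K w̃_i(x) · exp( (x − μ_i)² · t² / (2 σ₀² (σ₀² + t²)) ) ), a point x* ∈ ℝ is a global minimizer of f_t if and only if x* is a global minimizer of x ↦ −log p_t(x). -/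

import Mathlib

/-!
Multiplying the density `N(x | m, a)` by `exp ((x - m)² b / (2 a (a + b)))` changes the exponent to
`-(x - m)² / (2 (a + b))`, so the product is `C · N(x | m, a + b)`, where the constant
`C = √(2π(a + b)) / √(2πa)` does not depend on `m` or `x` (`gaussPDF_mul_exp`).
With `a = σ₀²` and `b = t²`, the sum inside the second logarithm of `f_t` is therefore
`C · p_t / p₀`, and `f_t = -log p_t - log C`. Subtracting a constant preserves global minimizers.
-/

/-- One-dimensional Gaussian probability density `N(x | μ, v)` with mean `μ`
and variance `v`: `(1/√(2π v)) · exp(−(x − μ)²/(2 v))`. -/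
noncomputable def gaussPDF (μ v x : ℝ) : ℝ :=
  (1 / Real.sqrt (2 * Real.pi * v)) * Real.exp (-(x - μ) ^ 2 / (2 * v))

theorem gaussPDF_pos (m x : ℝ) {v : ℝ} (hv : 0 < v) : 0 < gaussPDF m v x := by
  unfold gaussPDF
  positivity

theorem gaussPDF_mul_exp (m x : ℝ) {a b : ℝ} (ha : 0 < a) (hb : 0 < b) :
    gaussPDF m a x * Real.exp ((x - m) ^ 2 * b / (2 * a * (a + b))) =
      Real.sqrt (2 * Real.pi * (a + b)) / Real.sqrt (2 * Real.pi * a) * gaussPDF m (a + b) x := by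
  have hab : 0 < a + b := by positivity
  have h₁ : Real.sqrt (2 * Real.pi * a) ≠ 0 := by positivity
  have h₂ : Real.sqrt (2 * Real.pi * (a + b)) ≠ 0 := by positivity
  have hexp : -(x - m) ^ 2 / (2 * a) + (x - m) ^ 2 * b / (2 * a * (a + b)) =
      -(x - m) ^ 2 / (2 * (a + b)) := by
    field_simp
    ring
  unfold gaussPDF
  rw [mul_assoc, ← Real.exp_add, hexp]
  field_simp

/-- Conclusion of Theorem 1 (Procedure Equivalence): a point `x*` is a global minimizer
of the continuation objective `f_t` iff it is a global minimizer of `−log p_t`. -/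
theorem ft_min_iff_neg_log_pt_min (K : ℕ) (hK : 1 ≤ K) (w : Fin K → ℝ)
    (hw : ∀ i, 0 < w i) (hsum : ∑ i, w i = 1) (μ : Fin K → ℝ) (σ₀ t : ℝ)
    (hσ : 0 < σ₀) (ht : 0 < t) (xstar : ℝ) :
    let p₀ : ℝ → ℝ := fun y => ∑ i, w i * gaussPDF (μ i) (σ₀ ^ 2) y
    let pt : ℝ → ℝ := fun y => ∑ i, w i * gaussPDF (μ i) (σ₀ ^ 2 + t ^ 2) y
    let wtilde : Fin K → ℝ → ℝ := fun i y =>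
      w i * gaussPDF (μ i) (σ₀ ^ 2) y / ∑ j, w j * gaussPDF (μ j) (σ₀ ^ 2) y
    let f : ℝ → ℝ := fun y =>
      -Real.log (p₀ y) -
        Real.log (∑ i, wtilde i y *
          Real.exp ((y - μ i) ^ 2 * t ^ 2 / (2 * σ₀ ^ 2 * (σ₀ ^ 2 + t ^ 2))))
    (∀ y : ℝ, f xstar ≤ f y) ↔ (∀ y : ℝ, -Real.log (pt xstar) ≤ -Real.log (pt y)) := by
  intro p₀ pt wtilde f
  have hne : (Finset.univ : Finset (Fin K)).Nonempty := ⟨⟨0, hK⟩, Finset.mem_univ _⟩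
  have ha : 0 < σ₀ ^ 2 := by positivity
  have hb : 0 < t ^ 2 := by positivity
  have hp₀ : ∀ y, 0 < p₀ y := fun y =>
    Finset.sum_pos (fun i _ => mul_pos (hw i) (gaussPDF_pos _ _ ha)) hne
  have hpt : ∀ y, 0 < pt y := fun y =>
    Finset.sum_pos (fun i _ => mul_pos (hw i) (gaussPDF_pos _ _ (add_pos ha hb))) hne
  obtain ⟨C, hC, hmul⟩ : ∃ C : ℝ, 0 < C ∧ ∀ m x : ℝ,
      gaussPDF m (σ₀ ^ 2) x * Real.exp ((x - m) ^ 2 * t ^ 2 / (2 * σ₀ ^ 2 * (σ₀ ^ 2 + t ^ 2))) =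
        C * gaussPDF m (σ₀ ^ 2 + t ^ 2) x :=
    ⟨_, by positivity, fun m x => gaussPDF_mul_exp m x ha hb⟩
  have hsum_eq : ∀ y, ∑ i, wtilde i y *
      Real.exp ((y - μ i) ^ 2 * t ^ 2 / (2 * σ₀ ^ 2 * (σ₀ ^ 2 + t ^ 2))) = C * pt y / p₀ y := by
    intro y
    simp only [pt, Finset.mul_sum, Finset.sum_div]
    refine Finset.sum_congr rfl fun i _ => ?_
    change w i * gaussPDF (μ i) (σ₀ ^ 2) y / p₀ y * _ = _
    rw [div_mul_eq_mul_div, mul_assoc, hmul, mul_left_comm]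
  have hf : ∀ y, f y = -Real.log (pt y) - Real.log C := by
    intro y
    change -Real.log (p₀ y) - Real.log (∑ i, wtilde i y * _) = _
    rw [hsum_eq, Real.log_div (mul_pos hC (hpt y)).ne' (hp₀ y).ne',
      Real.log_mul hC.ne' (hpt y).ne']
    ring
  simp only [hf, sub_le_sub_iff_right]
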